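/- arXiv:1509.08318 — 2 statements merged into one kernel-verified Lean document; each statement's English description precedes it below -/
import Mathlib

section
/- Let A be a unital C*-algebra with strict comparison of positive elements with respect to bounded traces, and let a ∈ A be a positive contraction. If m ∈ ℕ satisfies τ(a) > 2/m for every tracial state τ on A, then there exist m² contractions v₁, …, v_{m²} ∈ A such that 1 = Σ_{i=1}^{m²} v_i a v_i*. -/
open scoped ComplexOrder ENNReal

set_option synthInstance.maxHeartbeats 1000000
set_option maxHeartbeats 1000000

noncomputable section

/-- Tracial states on a unital C*-algebra. -/
def IsTracialState {B : Type} [CStarAlgebra B] (τ : B →L[ℂ] ℂ) : Prop :=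
  τ 1 = 1 ∧ (∀ b : B, (∃ y, b = star y * y) → 0 ≤ τ b) ∧ ∀ a b : B, τ (a * b) = τ (b * a)

/-- The C*-norm on a complex star algebra (such as a matrix algebra over a C*-algebra),
defined via the spectral radius; this recovers the unique C*-norm when one exists. -/
def cstarNorm {B : Type} [Ring B] [StarRing B] [Algebra ℂ B] (a : B) : ℝ :=
  Real.sqrt (spectralRadius ℂ (star a * a)).toReal

/-- `a` is Cuntz below `b` (in a matrix algebra over a C*-algebra):
`a = lim xₙ b xₙ*`, with respect to the C*-norm. -/
def CuntzBelowIn {B : Type} [Ring B] [StarRing B] [Algebra ℂ B] (a b : B) : Prop :=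
  ∃ x : ℕ → B,
    Filter.Tendsto (fun n => cstarNorm (a - x n * b * star (x n))) Filter.atTop (nhds 0)

/-- `L = d_{τ⊗Trₖ}(a) = limₙ (τ⊗Trₖ)(a^{1/n})`, encoded via a sequence of positive `n`-th
roots of `a` (which are unique when they exist, so this determines `L`). -/
def IsDLimit {A : Type} [CStarAlgebra A] {k : ℕ} (τ : A →L[ℂ] ℂ)
    (a : Matrix (Fin k) (Fin k) A) (L : ℝ) : Prop :=
  ∃ r : ℕ → Matrix (Fin k) (Fin k) A,
    (∀ n, (∃ y : Matrix (Fin k) (Fin k) A, r n = star y * y) ∧ r n ^ (n + 1) = a) ∧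
    Filter.Tendsto (fun n => ∑ i, τ (r n i i)) Filter.atTop (nhds (L : ℂ))

/-- Strict comparison of positive elements with respect to bounded traces: for positive
matrices `a, b` over `A`, if `d_{τ⊗Trₖ}(a) < d_{τ⊗Trₖ}(b)` for every tracial state `τ`,
then `a` is Cuntz below `b`. -/
def StrictComparison (A : Type) [CStarAlgebra A] : Prop :=
  ∀ (k : ℕ) (a b : Matrix (Fin k) (Fin k) A),
    (∃ y : Matrix (Fin k) (Fin k) A, a = star y * y) →
    (∃ y : Matrix (Fin k) (Fin k) A, b = star y * y) →
    (∀ (τ : A →L[ℂ] ℂ), IsTracialState τ → ∀ (La Lb : ℝ),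
      IsDLimit τ a La → IsDLimit τ b Lb → La < Lb) →
    CuntzBelowIn a b

section Helpers

lemma aux_root_proj {B : Type} [CStarAlgebra B] [PartialOrder B] [StarOrderedRing B]
    (r e : B) (hr : 0 ≤ r) (n : ℕ) (h : r ^ (n + 1) = e) (he : e * e = e) : r = e := by
  have hsa : IsSelfAdjoint r := .of_nonneg hr
  have h1 : cfc (fun t : ℝ => t ^ (n + 1) * t ^ (n + 1)) r = cfc (fun t : ℝ => t ^ (n + 1)) r := by
    rw [cfc_mul (fun t : ℝ => t ^ (n + 1)) (fun t : ℝ => t ^ (n + 1)) r, cfc_pow_id r (n + 1), h, he]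
  have h2 := (cfc_eq_cfc_iff_eqOn (R := ℝ) (a := r) (p := IsSelfAdjoint) hsa
    (by fun_prop) (by fun_prop)).1 h1
  have h3 : cfc (fun t : ℝ => t) r = cfc (fun t : ℝ => t ^ (n + 1)) r := by
    apply cfc_congr
    intro t ht
    have ht0 : 0 ≤ t := spectrum_nonneg_of_nonneg hr ht
    have := h2 ht
    simp only at this ⊢
    rcases eq_or_ne t 0 with rfl | hne
    · simp
    · have hp : t ^ (n + 1) ≠ 0 := pow_ne_zero _ hne
      have h5 : t ^ (n + 1) = 1 := by
        exact mul_left_cancel₀ hp (by rw [this, mul_one])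
      rw [h5]
      exact (pow_eq_one_iff_of_nonneg ht0 (Nat.succ_ne_zero n)).1 h5
  rw [cfc_id' ℝ r, cfc_pow_id r (n + 1), h] at h3
  exact h3

lemma aux_root_le {B : Type} [CStarAlgebra B] [PartialOrder B] [StarOrderedRing B]
    (r : B) (hr : 0 ≤ r) (n : ℕ) (h : r ^ (n + 1) ≤ 1) : r ^ (n + 1) ≤ r := by
  have hsa : IsSelfAdjoint r := .of_nonneg hr
  have h1 : cfc (fun t : ℝ => t ^ (n + 1)) r ≤ 1 := by rwa [cfc_pow_id r (n + 1)]
  rw [cfc_le_one_iff (fun t : ℝ => t ^ (n + 1)) r] at h1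
  have h3 : cfc (fun t : ℝ => t ^ (n + 1)) r ≤ cfc (fun t : ℝ => t) r := by
    refine cfc_mono (fun t ht => ?_) (by fun_prop) (by fun_prop)
    have ht0 : 0 ≤ t := spectrum_nonneg_of_nonneg hr ht
    have ht1 : t ≤ 1 := (pow_le_one_iff_of_nonneg ht0 (Nat.succ_ne_zero n)).1 (h1 t ht)
    exact pow_le_of_le_one ht0 ht1 (Nat.succ_ne_zero n)
  rwa [cfc_id' ℝ r, cfc_pow_id r (n + 1)] at h3

/-- A matrix of the form `star y * y` has nonnegative trace values. -/
lemma aux_trace_nonneg {A : Type} [CStarAlgebra A] {k : ℕ} (τ : A →L[ℂ] ℂ) (hτ : IsTracialState τ)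
    (y : Matrix (Fin k) (Fin k) A) : 0 ≤ ∑ i, τ ((star y * y) i i) := by
  refine Finset.sum_nonneg fun i _ => ?_
  rw [Matrix.mul_apply, map_sum]
  refine Finset.sum_nonneg fun j _ => ?_
  exact hτ.2.1 _ ⟨y j i, rfl⟩

lemma aux_nonneg_exists {B : Type} [CStarAlgebra B] [PartialOrder B] [StarOrderedRing B]
    (r : B) (hr : 0 ≤ r) : ∃ y, r = star y * y :=
  CStarAlgebra.nonneg_iff_eq_star_mul_self.1 hr

lemma aux_mat_root_proj {A : Type} [CStarAlgebra A] {k : ℕ} (r e : Matrix (Fin k) (Fin k) A)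
    (hr : ∃ y, r = star y * y) (n : ℕ) (h : r ^ (n + 1) = e) (he : e * e = e) : r = e := by
  let _ := CStarAlgebra.spectralOrder A
  have _ := CStarAlgebra.spectralOrderedRing A
  let E := CStarMatrix.ofMatrixStarAlgEquiv (n := Fin k) (A := A)
  apply E.injective
  refine aux_root_proj (E r) (E e) ?_ n ?_ ?_
  · obtain ⟨y, rfl⟩ := hr
    rw [map_mul, map_star]
    exact star_mul_self_nonneg _
  · rw [← h, map_pow]
  · rw [← map_mul, he]

lemma aux_mat_root_le {A : Type} [CStarAlgebra A] {k : ℕ} (r b : Matrix (Fin k) (Fin k) A)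
    (hr : ∃ y, r = star y * y) (n : ℕ) (h : r ^ (n + 1) = b) (hb : ∃ y, 1 - b = star y * y) :
    ∃ y, r - b = star y * y := by
  let _ := CStarAlgebra.spectralOrder A
  have _ := CStarAlgebra.spectralOrderedRing A
  let E := CStarMatrix.ofMatrixStarAlgEquiv (n := Fin k) (A := A)
  have h1 : E r ^ (n + 1) ≤ E r := by
    refine aux_root_le (E r) ?_ n ?_
    · obtain ⟨y, rfl⟩ := hr
      rw [map_mul, map_star]
      exact star_mul_self_nonneg _
    · obtain ⟨y, hy⟩ := hb
      rw [← map_pow, h, ← sub_nonneg, ← map_one E, ← map_sub, hy, map_mul, map_star]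
      exact star_mul_self_nonneg _
  rw [← map_pow, h, ← sub_nonneg, ← map_sub] at h1
  obtain ⟨y, hy⟩ := aux_nonneg_exists _ h1
  refine ⟨E.symm y, ?_⟩
  apply E.injective
  change E (r - b) = E (star (E.symm y) * E.symm y)
  rw [hy, map_mul, map_star, StarAlgEquiv.apply_symm_apply]

lemma aux_entry_le {A : Type} [CStarAlgebra A] {k : ℕ} (x : Matrix (Fin k) (Fin k) A)
    (i j : Fin k) : ‖x i j‖ ≤ cstarNorm x := by
  let _ := CStarAlgebra.spectralOrder A
  have _ := CStarAlgebra.spectralOrderedRing A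
  let E := CStarMatrix.ofMatrixStarAlgEquiv (n := Fin k) (A := A)
  let E' : Matrix (Fin k) (Fin k) A ≃ₐ[ℂ] CStarMatrix (Fin k) (Fin k) A :=
    AlgEquiv.ofRingEquiv (f := CStarMatrix.ofMatrixRingEquiv) (fun r => rfl)
  have hs : spectralRadius ℂ (star x * x) = spectralRadius ℂ (E (star x * x)) := by
    unfold spectralRadius
    have : spectrum ℂ (E' (star x * x)) = spectrum ℂ (star x * x) := AlgEquiv.spectrum_eq E' _
    rw [← this]
    rfl
  have h2 : cstarNorm x = ‖E x‖ := by
    unfold cstarNorm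
    rw [hs, map_mul, map_star, (IsSelfAdjoint.star_mul_self (E x)).spectralRadius_eq_nnnorm]
    rw [ENNReal.coe_toReal, coe_nnnorm, CStarRing.norm_star_mul_self, Real.sqrt_mul_self (norm_nonneg _)]
  rw [h2]
  exact CStarMatrix.norm_entry_le_norm (M := E x)

end Helpers

/-- **Lemma 2.2 of Tikuisis–White–Winter.** Let `A` be a unital C*-algebra with strict
comparison of positive elements by bounded traces, and let `a ∈ A` be a positive contraction.
If `m ∈ ℕ` satisfies `τ(a) > 2/m` for every tracial state `τ`, then there are `m²`
contractions `v₁, …, v_{m²}` with `1 = Σᵢ vᵢ a vᵢ*`. -/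
theorem one_eq_sum_conjugates {A : Type} [CStarAlgebra A]
    (hsc : StrictComparison A)
    (a : A) (hpos : ∃ y, a = star y * y) (hc : ‖a‖ ≤ 1)
    (m : ℕ) (hm : 0 < m)
    (htr : ∀ (τ : A →L[ℂ] ℂ), IsTracialState τ → ((2 / m : ℝ) : ℂ) < τ a) :
    ∃ v : Fin (m ^ 2) → A, (∀ i, ‖v i‖ ≤ 1) ∧
      (1 : A) = ∑ i, v i * a * star (v i) := by
  let _ := CStarAlgebra.spectralOrder A
  have _ := CStarAlgebra.spectralOrderedRing A
  have _ : NeZero m := ⟨hm.ne'⟩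
  have hm0 : (0 : ℝ) < m := by exact_mod_cast hm
  have ha0 : 0 ≤ a := CStarAlgebra.nonneg_iff_eq_star_mul_self.2 hpos
  have hsa : IsSelfAdjoint a := .of_nonneg ha0
  have ha1 : a ≤ 1 := (CStarAlgebra.norm_le_one_iff_of_nonneg a).1 hc
  have hspec0 : ∀ t ∈ spectrum ℝ a, 0 ≤ t := fun t ht => spectrum_nonneg_of_nonneg ha0 ht
  have hspec1 : ∀ t ∈ spectrum ℝ a, t ≤ 1 := (CFC.le_one_iff a).1 ha1
  -- the cut-down `b = (a - 1/m)_+`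
  obtain ⟨b, hbdef⟩ : ∃ b, b = cfc (fun t : ℝ => max (t - 1 / m) 0) a := ⟨_, rfl⟩
  have hb0 : 0 ≤ b := hbdef ▸ cfc_nonneg fun t _ => le_max_right _ _
  have hb1 : b ≤ 1 := by
    rw [hbdef]
    refine cfc_le_one _ _ fun t ht => max_le ?_ zero_le_one
    have := hspec1 t ht
    have : 0 < 1 / (m : ℝ) := by positivity
    linarith
  have hbge : a - algebraMap ℝ A (1 / m) ≤ b := by
    have h1 : cfc (fun t : ℝ => t - 1 / m) a = a - algebraMap ℝ A (1 / m) := by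
      rw [cfc_sub (fun t : ℝ => t) (fun _ => 1 / (m : ℝ)) a, cfc_id' ℝ a, cfc_const _ a]
    rw [← h1, hbdef]
    exact cfc_mono fun t _ => le_max_left _ _
  -- the element `g` with `g a g = b` and `g² ≤ m b`
  have hmx : ∀ t : ℝ, max t (1 / (m : ℝ)) ≠ 0 := fun t =>
    (lt_of_lt_of_le (by positivity) (le_max_right t (1 / (m : ℝ)))).ne'
  obtain ⟨f, hf⟩ : ∃ f : ℝ → ℝ, f = fun t : ℝ => √(max (t - 1 / m) 0 / max t (1 / m)) := ⟨_, rfl⟩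
  have hfc : Continuous f := by
    rw [hf]
    exact Real.continuous_sqrt.comp (Continuous.div (by fun_prop) (by fun_prop) hmx)
  have hf2 : ∀ t, f t * f t = max (t - 1 / m) 0 / max t (1 / m) := fun t => by
    rw [hf]
    refine Real.mul_self_sqrt (div_nonneg (le_max_right _ _) ?_)
    exact le_trans (by positivity) (le_max_right t (1 / (m : ℝ)))
  obtain ⟨g, hg⟩ : ∃ g, g = cfc f a := ⟨_, rfl⟩
  have hgsa : star g = g := by rw [hg]; exact (cfc_predicate f a : IsSelfAdjoint (cfc f a))
  have hgag : g * a * g = b := by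
    have : cfc (fun t => f t * t * f t) a = g * a * g := by
      rw [cfc_mul (fun t => f t * t) f a, cfc_mul f (fun t => t) a, cfc_id' ℝ a, hg]
    rw [← this, hbdef]
    refine cfc_congr fun t ht => ?_
    have h0 := hspec0 t ht
    have : f t * t * f t = f t * f t * t := by ring
    simp only [this, hf2]
    rcases le_total t (1 / (m : ℝ)) with h | h
    · rw [max_eq_right (sub_nonpos.2 h)]; simp
    · have ht : t ≠ 0 := (lt_of_lt_of_le (by positivity) h).ne'
      rw [max_eq_left h, div_mul_cancel₀ _ ht]
  have hgg : g * g ≤ (m : ℝ) • b := by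
    have : cfc (fun t => f t * f t) a = g * g := by
      rw [cfc_mul f f a, hg]
    rw [← this, hbdef, ← cfc_smul (m : ℝ) (fun t : ℝ => max (t - 1 / m) 0) a]
    have hcont : ContinuousOn (fun t => f t * f t) (spectrum ℝ a) := (hfc.mul hfc).continuousOn
    refine cfc_mono (fun t ht => ?_)
    rw [hf2, smul_eq_mul, div_le_iff₀ (lt_of_lt_of_le (by positivity) (le_max_right t (1 / (m : ℝ))))]
    have h1 : 1 / (m : ℝ) ≤ max t (1 / m) := le_max_right _ _
    have h2 : 0 ≤ max (t - 1 / (m : ℝ)) 0 := le_max_right _ _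
    have h3 : (m : ℝ) * (1 / m) = 1 := by field_simp
    calc max (t - 1 / (m : ℝ)) 0 = m * max (t - 1 / (m : ℝ)) 0 * (1 / m) := by
          rw [mul_right_comm, h3, one_mul]
      _ ≤ _ := by gcongr
  -- comparison
  have hcomp : CuntzBelowIn (Matrix.diagonal (Pi.single (0 : Fin m) (1 : A)))
      (Matrix.diagonal (fun _ : Fin m => b)) := by
    have hee : Matrix.diagonal (Pi.single (0 : Fin m) (1 : A)) *
        Matrix.diagonal (Pi.single (0 : Fin m) (1 : A)) =
        Matrix.diagonal (Pi.single (0 : Fin m) (1 : A)) := by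
      rw [Matrix.diagonal_mul_diagonal]
      congr 1
      funext i
      by_cases hi : i = 0
      · subst hi; simp
      · simp [hi]
    have hes : star (Matrix.diagonal (Pi.single (0 : Fin m) (1 : A))) =
        Matrix.diagonal (Pi.single (0 : Fin m) (1 : A)) := by
      rw [Matrix.star_eq_conjTranspose, Matrix.diagonal_conjTranspose]
      congr 1
      funext i
      by_cases hi : i = 0
      · subst hi; simp
      · simp [hi]
    refine hsc m _ _ ⟨_, by rw [hes, hee]⟩ ?_ ?_
    · obtain ⟨y, hy⟩ := CStarAlgebra.nonneg_iff_eq_star_mul_self.1 hb0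
      refine ⟨Matrix.diagonal fun _ => y, ?_⟩
      rw [Matrix.star_eq_conjTranspose, Matrix.diagonal_conjTranspose, Matrix.diagonal_mul_diagonal, hy]
      rfl
    · rintro τ hτ La Lb ⟨r, hr, hrL⟩ ⟨s, hs, hsL⟩
      have hLa : La = 1 := by
        have : ∀ n, ∑ i, τ (r n i i) = 1 := by
          intro n
          rw [aux_mat_root_proj (r n) _ (hr n).1 n (hr n).2 hee]
          rw [Finset.sum_eq_single 0]
          · simp [hτ.1]
          · intro i _ hi
            simp [hi]
          · simp
        simp only [this] at hrL
        exact_mod_cast tendsto_nhds_unique hrL tendsto_const_nhds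
      have htb : ((1 / m : ℝ) : ℂ) < τ b := by
        obtain ⟨y, hy⟩ := CStarAlgebra.nonneg_iff_eq_star_mul_self.1 (sub_nonneg.2 hbge)
        have h1 := hτ.2.1 _ ⟨y, hy⟩
        have h2 : τ (algebraMap ℝ A (1 / m)) = ((1 / m : ℝ) : ℂ) := by
          rw [Algebra.algebraMap_eq_smul_one, ← Complex.coe_smul, map_smul, hτ.1]
          simp
        rw [map_sub, map_sub, h2, sub_nonneg, sub_le_iff_le_add] at h1
        have h3 := lt_of_lt_of_le (htr τ hτ) h1
        rw [← sub_lt_iff_lt_add] at h3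
        refine lt_of_eq_of_lt ?_ h3
        push_cast; ring
      have hle : ∀ n, (m : ℂ) * τ b ≤ ∑ i, τ (s n i i) := by
        intro n
        obtain ⟨y, hy⟩ := aux_mat_root_le (s n) _ (hs n).1 n (hs n).2 (by
          obtain ⟨y, hy⟩ := CStarAlgebra.nonneg_iff_eq_star_mul_self.1 (sub_nonneg.2 hb1)
          refine ⟨Matrix.diagonal fun _ => y, ?_⟩
          rw [Matrix.star_eq_conjTranspose, Matrix.diagonal_conjTranspose,
            Matrix.diagonal_mul_diagonal, ← Matrix.diagonal_one, Matrix.diagonal_sub]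
          congr 1
          funext i
          exact hy)
        have h1 := aux_trace_nonneg τ hτ y
        rw [← hy] at h1
        simpa [Finset.sum_sub_distrib] using h1
      have hLb : (m : ℂ) * τ b ≤ Lb := ge_of_tendsto' hsL hle
      have h4 : (1 : ℂ) < (m : ℂ) * τ b := by
        have hmC : (0 : ℂ) < m := by exact_mod_cast hm
        have := mul_lt_mul_of_pos_left htb hmC
        refine lt_of_eq_of_lt ?_ this
        push_cast
        field_simp
      rw [hLa]
      exact_mod_cast lt_of_lt_of_le h4 hLb
  obtain ⟨x, hx⟩ := hcomp
  obtain ⟨n, hn⟩ := (hx.eventually (gt_mem_nhds zero_lt_one)).exists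
  obtain ⟨z, hz⟩ : ∃ z : Fin m → A, z = fun j => x n 0 j := ⟨_, rfl⟩
  obtain ⟨c, hcdef⟩ : ∃ c, c = ∑ j, z j * b * star (z j) := ⟨_, rfl⟩
  have hc1 : ‖1 - c‖ < 1 := by
    refine lt_of_le_of_lt ?_ hn
    refine le_of_eq_of_le ?_ (aux_entry_le _ (0 : Fin m) (0 : Fin m))
    congr 1
    rw [hcdef, hz, Matrix.sub_apply, Matrix.diagonal_apply_eq, Pi.single_eq_same, Matrix.mul_apply]
    simp [Matrix.mul_diagonal]
  have hc0 : 0 ≤ c := hcdef ▸ Finset.sum_nonneg fun j _ => star_right_conjugate_nonneg hb0 _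
  have hcu : IsUnit c := by
    have := isUnit_one_sub_of_norm_lt_one hc1
    rwa [sub_sub_cancel] at this
  have hcp : IsStrictlyPositive c := IsStrictlyPositive.iff_of_unital.2 ⟨hc0, hcu⟩
  obtain ⟨q, hq⟩ : ∃ q, q = c ^ (-(1 / 2) : ℝ) := ⟨_, rfl⟩
  have hq1 : q * c * q = 1 := hq ▸ CFC.conjugate_rpow_neg_one_half c
  have hqs : star q = q := by
    rw [hq]; exact (IsSelfAdjoint.of_nonneg CFC.rpow_nonneg)
  have hsum : ∑ j, (q * z j) * b * star (q * z j) = 1 := by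
    rw [← hq1, hcdef, Finset.mul_sum, Finset.sum_mul]
    refine Finset.sum_congr rfl fun j _ => ?_
    rw [star_mul, hqs]
    simp only [mul_assoc]
  obtain ⟨w, hw⟩ : ∃ w : Fin m → A, w = fun j => (√(m : ℝ))⁻¹ • (q * z j * g) := ⟨_, rfl⟩
  have hsq : (√(m : ℝ))⁻¹ * (√(m : ℝ))⁻¹ = (m : ℝ)⁻¹ := by
    rw [← mul_inv, Real.mul_self_sqrt hm0.le]
  have hstar : ∀ j, star (w j) = (√(m : ℝ))⁻¹ • (g * star (q * z j)) := fun j => by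
    rw [hw]; simp only [star_smul, star_mul _ g, hgsa, star_trivial]
  have hwa : ∀ j, w j * a * star (w j) = (m : ℝ)⁻¹ • ((q * z j) * b * star (q * z j)) := fun j => by
    rw [hstar, hw, ← hgag]
    simp only [smul_mul_assoc, mul_smul_comm, smul_smul, hsq, mul_assoc]
  have hwn : ∀ j, ‖w j‖ ≤ 1 := fun j => by
    have h1 : w j * star (w j) ≤ 1 := by
      have e1 : w j * star (w j) = (m : ℝ)⁻¹ • ((q * z j) * (g * g) * star (q * z j)) := by
        rw [hstar, hw]
        simp only [smul_mul_assoc, mul_smul_comm, smul_smul, hsq, mul_assoc]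
      have e2 : (q * z j) * b * star (q * z j) ≤ 1 := by
        rw [← hsum]
        exact Finset.single_le_sum (f := fun j => (q * z j) * b * star (q * z j))
          (fun i _ => star_right_conjugate_nonneg hb0 _) (Finset.mem_univ j)
      rw [e1]
      refine le_trans (smul_le_smul_of_nonneg_left
        (star_right_conjugate_le_conjugate hgg (q * z j)) (by positivity)) ?_
      rw [mul_smul_comm, smul_mul_assoc, smul_smul, inv_mul_cancel₀ hm0.ne', one_smul]
      exact e2
    have h2 := (CStarAlgebra.norm_le_one_iff_of_nonneg _ (mul_star_self_nonneg (w j))).2 h1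
    rw [CStarRing.norm_self_mul_star] at h2
    nlinarith [norm_nonneg (w j)]
  let φ : Fin (m ^ 2) ≃ Fin m × Fin m := (finCongr (sq m)).trans finProdFinEquiv.symm
  refine ⟨fun i => w (φ i).1, fun i => hwn _, ?_⟩
  rw [Equiv.sum_comp φ (fun p => w p.1 * a * star (w p.1)), Fintype.sum_prod_type]
  simp only [Finset.sum_const, Finset.card_univ, Fintype.card_fin, hwa]
  rw [← Finset.smul_sum, ← Finset.smul_sum, hsum, ← Nat.cast_smul_eq_nsmul ℝ, smul_smul,
    mul_inv_cancel₀ hm0.ne', one_smul]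
end
end

section
/- Let A be a non-unital C*-algebra and let τ_A be a faithful tracial state on A. Then the functional τ_{A∼} on the minimal unitisation A∼ of A defined by τ_{A∼}(λ1 + a) := λ + τ_A(a) for λ ∈ ℂ and a ∈ A is a faithful tracial state on A∼; in particular, for every nonzero positive element b of A∼ one has τ_{A∼}(b) > 0. -/
open scoped ComplexOrder

set_option synthInstance.maxHeartbeats 1000000
set_option maxHeartbeats 1000000

noncomputable section

theorem pos_hermitian {B : Type} [NonUnitalRing B] [StarRing B] [Module ℂ B]
    [IsScalarTower ℂ B B] [SMulCommClass ℂ B B] [StarModule ℂ B] (T : B →ₗ[ℂ] ℂ)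
    (hT : ∀ y, 0 ≤ T (star y * y)) (x y : B) :
    starRingEnd ℂ (T (star y * x)) = T (star x * y) := by
  have h1 := hT x
  have h2 := hT y
  have h3 := hT (x + y)
  have h4 := hT (x + Complex.I • y)
  simp only [star_add, star_smul, mul_add, add_mul, map_add, smul_mul_assoc, mul_smul_comm,
    map_smul, smul_eq_mul, Complex.star_def, Complex.conj_I, Complex.le_def] at h1 h2 h3 h4
  apply Complex.ext <;> simp at * <;> linarith

theorem pos_cauchy_schwarz {B : Type} [NonUnitalRing B] [StarRing B] [Module ℂ B]
    [IsScalarTower ℂ B B] [SMulCommClass ℂ B B] [StarModule ℂ B] (T : B →ₗ[ℂ] ℂ)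
    (hT : ∀ y, 0 ≤ T (star y * y)) (x y : B) :
    ‖T (star x * y)‖ ^ 2 ≤ (T (star x * x)).re * (T (star y * y)).re := by
  let c : PreInnerProductSpace.Core ℂ B :=
    { inner := fun x y => T (star x * y)
      conj_inner_symm := fun x y => pos_hermitian T hT x y
      re_inner_nonneg := fun x => (Complex.le_def.1 (hT x)).1
      add_left := fun x y z => by simp [add_mul]
      smul_left := fun x y r => by simp [smul_mul_assoc] }
  have h := @InnerProductSpace.Core.inner_mul_inner_self_le ℂ B _ _ _ c x y
  have e : ‖T (star y * x)‖ = ‖T (star x * y)‖ := by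
    rw [← pos_hermitian T hT x y, RCLike.norm_conj]
  have h' : ‖T (star x * y)‖ * ‖T (star y * x)‖
    ≤ (T (star x * x)).re * (T (star y * y)).re := h
  rw [e] at h'
  rw [sq]
  exact h'

theorem state_facts {A : Type} [NonUnitalCStarAlgebra A] (τ : A →L[ℂ] ℂ) (hnorm : ‖τ‖ = 1)
    (hT : ∀ y, 0 ≤ τ (star y * y)) (a : A) :
    τ (star a) = starRingEnd ℂ (τ a) ∧ ‖τ a‖ ^ 2 ≤ (τ (star a * a)).re := by
  let _ := CStarAlgebra.spectralOrder A
  have := CStarAlgebra.spectralOrderedRing A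
  have hl := CStarAlgebra.increasingApproximateUnit A
  have hne := hl.neBot
  have hr : Filter.Tendsto (fun e => τ (e * a)) (CStarAlgebra.approximateUnit A)
      (nhds (τ a)) := (τ.continuous.tendsto a).comp (hl.tendsto_mul_right a)
  have hs : Filter.Tendsto (fun e => τ (star a * e)) (CStarAlgebra.approximateUnit A)
      (nhds (τ (star a))) := (τ.continuous.tendsto _).comp (hl.tendsto_mul_left (star a))
  constructor
  · refine tendsto_nhds_unique hs (((Complex.continuous_conj.tendsto _).comp hr).congr' ?_)
    filter_upwards [hl.eventually_star_eq] with e he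
    have := pos_hermitian (τ : A →ₗ[ℂ] ℂ) hT a e
    rw [he] at this
    exact this
  · refine le_of_tendsto (hr.norm.pow 2) ?_
    filter_upwards [hl.eventually_star_eq, hl.eventually_norm] with e he hn
    have h := pos_cauchy_schwarz (τ : A →ₗ[ℂ] ℂ) hT e a
    have h0 := (Complex.le_def.1 (hT a)).1
    have h1 : (τ (star e * e)).re ≤ 1 := by
      calc (τ (star e * e)).re ≤ ‖τ (star e * e)‖ := Complex.re_le_norm _
        _ ≤ ‖τ‖ * ‖star e * e‖ := τ.le_opNorm _
        _ = ‖e‖ * ‖e‖ := by rw [hnorm, one_mul, CStarRing.norm_star_mul_self]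
        _ ≤ 1 := by nlinarith [norm_nonneg e]
    simp only [ContinuousLinearMap.coe_coe] at h
    nth_rw 1 [he] at h
    simp only [Complex.zero_re] at h0
    nlinarith

/-- **Remark 1.3(iii) of Tikuisis–White–Winter.** If `τ` is a faithful tracial state on a
non-unital C*-algebra `A`, then the functional `λ1 + a ↦ λ + τ(a)` on the minimal
unitisation `A∼` is a faithful tracial state: it is linear, continuous, unital, positive,
tracial, and strictly positive on every nonzero positive element of `A∼`. -/
theorem unitization_trace_faithful {A : Type} [NonUnitalCStarAlgebra A]
    (hA : ¬∃ e : A, ∀ a : A, e * a = a ∧ a * e = a)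
    (τ : A →L[ℂ] ℂ) (hnorm : ‖τ‖ = 1)
    (hpos : ∀ a : A, (∃ y, a = star y * y) → 0 ≤ τ a)
    (htracial : ∀ a b : A, τ (a * b) = τ (b * a))
    (hfaithful : ∀ a : A, (∃ y, a = star y * y) → a ≠ 0 → 0 < τ a) :
    ∀ T : Unitization ℂ A → ℂ,
      (T = fun x => x.fst + τ x.snd) →
      (∀ (c : ℂ) (x y : Unitization ℂ A), T (c • x + y) = c * T x + T y) ∧
      Continuous T ∧
      T 1 = 1 ∧
      (∀ b : Unitization ℂ A, (∃ y, b = star y * y) → 0 ≤ T b) ∧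
      (∀ x y : Unitization ℂ A, T (x * y) = T (y * x)) ∧
      (∀ b : Unitization ℂ A, (∃ y, b = star y * y) → b ≠ 0 → 0 < T b) := by
  intro T hTdef
  have hτ : ∀ y, 0 ≤ τ (star y * y) := fun y => hpos _ ⟨y, rfl⟩
  have hlin : ∀ (c : ℂ) (x y : Unitization ℂ A), T (c • x + y) = c * T x + T y := by
    intro c x y
    simp [hTdef]
    ring
  have htr : ∀ x y : Unitization ℂ A, T (x * y) = T (y * x) := by
    intro x y
    simp [hTdef, htracial x.snd y.snd]
    ring
  have hP : ∀ y : Unitization ℂ A, 0 ≤ T (star y * y) := by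
    intro y
    obtain ⟨h1, h2⟩ := state_facts τ hnorm hτ y.snd
    have h3 := hτ y.snd
    rw [Complex.le_def] at h3 ⊢
    rw [← Complex.normSq_eq_norm_sq, Complex.normSq_apply] at h2
    simp [hTdef, h1] at h2 h3 ⊢
    constructor
    · nlinarith [sq_nonneg (y.fst.re + (τ y.snd).re), sq_nonneg (y.fst.im + (τ y.snd).im)]
    · rw [← h3.2]
      ring
  let L : Unitization ℂ A →ₗ[ℂ] ℂ :=
    { toFun := T
      map_add' := fun x y => by simpa using hlin 1 x y
      map_smul' := fun c x => by
        have h0 : T 0 = 0 := by simp [hTdef]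
        simpa [h0] using hlin c x 0 }
  have hinr : ∀ c : A, T (c : Unitization ℂ A) = τ c := fun c => by simp [hTdef]
  have hz : ∀ y : A, τ (star y * y) = 0 → y = 0 := by
    intro y hy
    by_contra hne
    have := hfaithful (star y * y) ⟨y, rfl⟩ (by simpa [CStarRing.star_mul_self_eq_zero_iff] using hne)
    exact this.ne' hy
  refine ⟨hlin, ?_, by simp [hTdef], ?_, htr, ?_⟩
  · rw [hTdef]
    exact Unitization.continuous_fst.add (τ.continuous.comp Unitization.continuous_snd)
  · rintro b ⟨y, rfl⟩
    exact hP y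
  · rintro b ⟨y, rfl⟩ hb
    refine lt_of_le_of_ne (hP y) fun h0 => ?_
    have hzero : ∀ z : Unitization ℂ A, T (star z * y) = 0 := by
      intro z
      have h : ‖T (star z * y)‖ ^ 2 ≤ (T (star z * z)).re * (T (star y * y)).re :=
        pos_cauchy_schwarz L hP z y
      rw [← h0] at h
      simpa using h
    have hann : ∀ c : A, y.fst • c + y.snd * c = 0 := by
      intro c
      apply hz
      have key : ((y.fst • c + y.snd * c : A) : Unitization ℂ A) = y * (c : Unitization ℂ A) := by
        ext <;> simp
      rw [← hinr, Unitization.inr_mul, Unitization.inr_star, key, ←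
        hzero (y * (c * star (c : Unitization ℂ A)))]
      simp only [star_mul, star_star, mul_assoc]
      rw [htr (c : Unitization ℂ A)]
      simp only [mul_assoc]
    by_cases hf : y.fst = 0
    · have hy : y.snd = 0 := by
        have h := hann (star y.snd)
        simpa [hf] using h
      exact hb (by rw [show y = 0 from Unitization.ext hf hy]; simp)
    · apply hA
      have hl : ∀ c : A, (-(y.fst)⁻¹ • y.snd) * c = c := by
        intro c
        have h := eq_neg_of_add_eq_zero_right (hann c)
        rw [smul_mul_assoc, h, neg_smul_neg, smul_smul, inv_mul_cancel₀ hf, one_smul]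
      generalize -(y.fst)⁻¹ • y.snd = e at hl
      have hs : ∀ c : A, c * star e = c := fun c => by
        have := congrArg star (hl (star c))
        simpa using this
      have he : star e = e := (hl (star e)).symm.trans (hs e)
      refine ⟨e, fun a => ⟨hl a, ?_⟩⟩
      have := hs a
      rwa [he] at this
end
end
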